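/- Let $m\ge0$, $n\ge1$ be integers, $a>0$, $b>0$ reals with $\mu_0\le n$. Let $Q:[0,b]\to[0,\infty)$ be continuously differentiable with $Q\ge0$, and let $\psi:[0,a]\times[0,\infty)\to[0,b]$ be smooth on $(0,a)\times(0,\infty)$ and continuous up to the boundary, satisfying the $J$-flow equation $\partial_t\psi = Q(\psi)\Big(\partial_x^2\psi + \big(\tfrac{m}{x}+\tfrac{n}{1+x}\big)\partial_x\psi - \big(\tfrac{m}{x^2}+\tfrac{n}{(1+x)^2}\big)\psi - \tfrac{n}{(1+x)^2}\Big)$ with $\psi(0,t)=0$, $\psi(a,t)=b$, $\psi(x,0)=\tfrac{b}{a}x$. Assume moreover that for every $T>0$, $\sup_{(0,a)\times(0,T]}\Big|Q'(\psi)\Big(\partial_x^2\psi + \big(\tfrac{m}{x}+\tfrac{n}{1+x}\big)\partial_x\psi - \big(\tfrac{m}{x^2}+\tfrac{n}{(1+x)^2}\big)\psi - \tfrac{n}{(1+x)^2}\Big)\Big|<\infty$. Then $\partial_t\psi(x,t)\le0$ for all $(x,t)\in[0,a]\times[0,\infty)$. -/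

import Mathlib

/-- Oriented integral `I_{m,n,s}(x) = ∫_s^x tᵐ(1+t)ⁿ dt`. -/
noncomputable def Imns (m n : ℕ) (s x : ℝ) : ℝ := ∫ t in s..x, t ^ m * (1 + t) ^ n

/-- The slope `μ_0 = ((1+a)ⁿ aᵐ b + n I_{m,n-1}(a)) / I_{m,n}(a)`. -/
noncomputable def muZero (m n : ℕ) (a b : ℝ) : ℝ :=
  ((1 + a) ^ n * a ^ m * b + (n : ℝ) * Imns m (n - 1) 0 a) / Imns m n 0 a

/-!
If `ψ(x, ·)` failed to be nonincreasing, then for small `ε > 0` and some `T` the function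
`ψ(x, s) - ψ(x, t) - ε (s + t)` on `0 ≤ x ≤ a`, `0 ≤ t ≤ s ≤ T` would have a positive maximum, attained at
some `t < s` and, since the boundary values are constant in time, at an interior `x`.
Write the equation as `∂_t ψ = Q(ψ) L[ψ]` with `Q ≥ 0`. Maximality in `s` gives `∂_t ψ(x, s) ≥ ε`,
hence `L[ψ(·, s)](x) > 0`; maximality in `t` gives `∂_t ψ(x, t) ≤ -ε`, hence `L[ψ(·, t)](x) ≤ 0`,
and for `t = 0` the latter says that the straight line is a supersolution, which is `b ≤ a`.
But `ψ(·, s) - ψ(·, t)` has a positive local maximum at `x`, so ellipticity of `L` gives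
`L[ψ(·, s)](x) ≤ L[ψ(·, t)](x)`, a contradiction.

The condition `μ_0 ≤ n` reads `(1+a)ⁿ aᵐ b ≤ n ∫_0^a t^{m+1} (1+t)^{n-1} dt`, and bounding `t^{m+1}`
by `a^{m+1}` gives `b < a`.
-/

open Set Filter Topology

section Imns

variable {m n : ℕ} {s x a b : ℝ}

lemma intervalIntegrable_pow_mul_one_add_pow (m n : ℕ) (s x : ℝ) :
    IntervalIntegrable (fun t : ℝ => t ^ m * (1 + t) ^ n) MeasureTheory.volume s x :=
  Continuous.intervalIntegrable (by fun_prop) s x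

lemma Imns_pos (hs : 0 ≤ s) (hsx : s < x) : 0 < Imns m n s x := by
  refine intervalIntegral.intervalIntegral_pos_of_pos_on
    (intervalIntegrable_pow_mul_one_add_pow m n s x) (fun t ht => ?_) hsx
  have : 0 < t := hs.trans_lt ht.1
  positivity

lemma Imns_succ_right (m n : ℕ) (s x : ℝ) :
    Imns m (n + 1) s x = Imns m n s x + Imns (m + 1) n s x := by
  rw [Imns, Imns, Imns, ← intervalIntegral.integral_add
    (intervalIntegrable_pow_mul_one_add_pow _ _ _ _)
    (intervalIntegrable_pow_mul_one_add_pow _ _ _ _)]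
  congr 1
  ext t
  ring

lemma Imns_zero_left (n : ℕ) (s x : ℝ) :
    Imns 0 n s x = ((1 + x) ^ (n + 1) - (1 + s) ^ (n + 1)) / (n + 1) := by
  simp only [Imns, pow_zero, one_mul]
  rw [intervalIntegral.integral_comp_add_left (fun t => t ^ n) 1, integral_pow]

lemma Imns_le_pow_mul_Imns_zero_left (hs : 0 ≤ s) (hsx : s ≤ x) :
    Imns m n s x ≤ x ^ m * Imns 0 n s x := by
  simp only [Imns, pow_zero, one_mul]
  rw [← intervalIntegral.integral_const_mul]
  refine intervalIntegral.integral_mono_on hsx (intervalIntegrable_pow_mul_one_add_pow _ _ _ _)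
    (Continuous.intervalIntegrable (by fun_prop) _ _) fun t ht => ?_
  have : 0 ≤ t := hs.trans ht.1
  gcongr
  exact ht.2

lemma lt_of_muZero_le (hn : 1 ≤ n) (ha : 0 < a) (h : muZero m n a b ≤ n) : b < a := by
  obtain ⟨k, rfl⟩ := Nat.exists_eq_add_of_le' hn
  rw [muZero, div_le_iff₀ (Imns_pos le_rfl ha), Nat.add_sub_cancel, Imns_succ_right] at h
  push_cast at h
  have hI : (k + 1) * Imns (m + 1) k 0 a ≤ a ^ (m + 1) * ((1 + a) ^ (k + 1) - 1) :=
    calc (k + 1) * Imns (m + 1) k 0 a ≤ (k + 1) * (a ^ (m + 1) * Imns 0 k 0 a) := by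
          gcongr
          exact Imns_le_pow_mul_Imns_zero_left le_rfl ha.le
      _ = a ^ (m + 1) * ((1 + a) ^ (k + 1) - 1) := by
          rw [Imns_zero_left, add_zero, one_pow]
          field_simp
  have ham : 0 < a ^ (m + 1) := by positivity
  refine lt_of_mul_lt_mul_left (a := (1 + a) ^ (k + 1) * a ^ m) ?_ (by positivity)
  calc (1 + a) ^ (k + 1) * a ^ m * b ≤ (k + 1) * Imns (m + 1) k 0 a := by linarith
    _ ≤ a ^ (m + 1) * ((1 + a) ^ (k + 1) - 1) := hI
    _ < a ^ (m + 1) * (1 + a) ^ (k + 1) := by linarith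
    _ = (1 + a) ^ (k + 1) * a ^ m * a := by ring

end Imns

section Slices

variable {𝕜 E F G : Type*} [NontriviallyNormedField 𝕜] [NormedAddCommGroup E] [NormedSpace 𝕜 E]
  [NormedAddCommGroup F] [NormedSpace 𝕜 F] [NormedAddCommGroup G] [NormedSpace 𝕜 G]
  {f : E → F → G} {k : WithTop ℕ∞} {x : E} {y : F}

lemma contDiffAt_slice_left (hf : ContDiffAt 𝕜 k (fun p : E × F => f p.1 p.2) (x, y)) :
    ContDiffAt 𝕜 k (fun z => f z y) x :=
  hf.comp (f := fun z : E => (z, y)) x (by fun_prop)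

lemma contDiffAt_slice_right (hf : ContDiffAt 𝕜 k (fun p : E × F => f p.1 p.2) (x, y)) :
    ContDiffAt 𝕜 k (f x) y :=
  hf.comp (f := fun z : F => (x, z)) y (by fun_prop)

end Slices

section Derivatives

variable {f u w : ℝ → ℝ} {S : Set ℝ} {c r s x : ℝ}

lemma deriv_nonpos_of_antitoneOn (hf : AntitoneOn f S) (hS : UniqueDiffWithinAt ℝ S x) :
    deriv f x ≤ 0 := by
  by_cases hd : DifferentiableAt ℝ f x
  · exact hd.derivWithin hS ▸ hf.derivWithin_nonpos
  · exact (deriv_zero_of_not_differentiableAt hd).le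

lemma le_deriv_of_forall_mem_Ioo (hf : DifferentiableAt ℝ f s) (hrs : r < s)
    (h : ∀ σ ∈ Ioo r s, f σ + c * (s - σ) ≤ f s) : c ≤ deriv f s := by
  refine ge_of_tendsto (hasDerivAt_iff_tendsto_slope_left_right.1 hf.hasDerivAt).1 ?_
  filter_upwards [Ioo_mem_nhdsLT hrs] with σ hσ
  rw [slope_comm, slope_def_field, le_div_iff₀ (sub_pos.2 hσ.2)]
  linarith [h σ hσ]

lemma deriv_deriv_nonpos_of_isLocalMax (h : IsLocalMax f x) (hf : ContinuousAt f x) :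
    deriv (deriv f) x ≤ 0 := by
  by_contra! hpos
  -- By the second derivative test `x` is also a local minimum, so `f` is locally constant.
  have hmin : IsLocalMin f x := isLocalMin_of_deriv_deriv_pos hpos h.deriv_eq_zero hf
  have hconst : f =ᶠ[𝓝 x] fun _ => f x := by
    filter_upwards [h, hmin] with y hle hge using le_antisymm hle hge
  have : deriv (deriv f) x = 0 := by simp [hconst.deriv.deriv_eq]
  exact hpos.ne' this

lemma deriv_eq_of_isLocalMax_sub (hu : DifferentiableAt ℝ u x) (hw : DifferentiableAt ℝ w x)
    (hmax : IsLocalMax (fun y => u y - w y) x) : deriv u x = deriv w x := by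
  rw [← sub_eq_zero, ← deriv_fun_sub hu hw]
  exact hmax.deriv_eq_zero

lemma deriv_deriv_sub (hu : ContDiffAt ℝ 2 u x) (hw : ContDiffAt ℝ 2 w x) :
    deriv (deriv fun y => u y - w y) x = deriv (deriv u) x - deriv (deriv w) x := by
  have hdiff {g : ℝ → ℝ} (hg : ContDiffAt ℝ 2 g x) : DifferentiableAt ℝ (deriv g) x :=
    (hg.derivWithin (m := 1) (by norm_num)).differentiableAt (by norm_num)
  have hderiv : deriv (fun y => u y - w y) =ᶠ[𝓝 x] fun y => deriv u y - deriv w y := by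
    filter_upwards [hu.eventually (by simp), hw.eventually (by simp)] with y huy hwy
    exact deriv_fun_sub (huy.differentiableAt (by norm_num)) (hwy.differentiableAt (by norm_num))
  rw [hderiv.deriv_eq, deriv_fun_sub (hdiff hu) (hdiff hw)]

lemma deriv_deriv_le_of_isLocalMax_sub (hu : ContDiffAt ℝ 2 u x) (hw : ContDiffAt ℝ 2 w x)
    (hmax : IsLocalMax (fun y => u y - w y) x) : deriv (deriv u) x ≤ deriv (deriv w) x := by
  rw [← sub_nonpos, ← deriv_deriv_sub hu hw]
  exact deriv_deriv_nonpos_of_isLocalMax hmax (hu.continuousAt.sub hw.continuousAt)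

end Derivatives

section Antitone

lemma isCompact_setOf_le_le_le {α : Type*} [Preorder α] [TopologicalSpace α]
    [OrderClosedTopology α] [CompactIccSpace α] (r T : α) :
    IsCompact {p : α × α | r ≤ p.1 ∧ p.1 ≤ p.2 ∧ p.2 ≤ T} := by
  refine (isCompact_Icc (a := (r, r)) (b := (T, T))).of_isClosed_subset ?_ ?_
  · exact (isClosed_le continuous_const continuous_fst).inter
      ((isClosed_le continuous_fst continuous_snd).inter
        (isClosed_le continuous_snd continuous_const))
  · rintro ⟨t, s⟩ ⟨hrt, hts, hsT⟩
    exact ⟨⟨hrt, hrt.trans hts⟩, ⟨hts.trans hsT, hsT⟩⟩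

/-- The increment of `u` from time `p.2.1` to time `p.2.2` at the point `p.1`, penalized by `ε`
times the sum of the two times. -/
def penalizedIncrement {X : Type*} (u : X → ℝ → ℝ) (ε : ℝ) (p : X × ℝ × ℝ) : ℝ :=
  u p.1 p.2.2 - u p.1 p.2.1 - ε * (p.2.1 + p.2.2)

variable {X : Type*} [TopologicalSpace X] {K : Set X} {u : X → ℝ → ℝ}

lemma continuousOn_penalizedIncrement
    (hu : ContinuousOn (fun p : X × ℝ => u p.1 p.2) (K ×ˢ Ici 0)) (ε T : ℝ) :
    ContinuousOn (penalizedIncrement u ε)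
      (K ×ˢ {p : ℝ × ℝ | 0 ≤ p.1 ∧ p.1 ≤ p.2 ∧ p.2 ≤ T}) := by
  refine ContinuousOn.sub (ContinuousOn.sub ?_ ?_) (by fun_prop)
  · exact hu.comp (f := fun p : X × ℝ × ℝ => (p.1, p.2.2)) (by fun_prop)
      fun p hp => ⟨hp.1, hp.2.1.trans hp.2.2.1⟩
  · exact hu.comp (f := fun p : X × ℝ × ℝ => (p.1, p.2.1)) (by fun_prop)
      fun p hp => ⟨hp.1, hp.2.1⟩

lemma exists_penalized_max_of_not_antitoneOn (hK : IsCompact K)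
    (hu : ContinuousOn (fun p : X × ℝ => u p.1 p.2) (K ×ˢ Ici 0))
    (h : ¬ ∀ x ∈ K, AntitoneOn (u x) (Ici 0)) :
    ∃ ε > 0, ∃ x ∈ K, ∃ t s, 0 ≤ t ∧ t < s ∧ u x t < u x s ∧
      (∀ y ∈ K, u y s - u y t ≤ u x s - u x t) ∧
      (∀ σ ∈ Ioo t s, u x σ + ε * (s - σ) ≤ u x s) ∧
      (∀ τ ∈ Ioo 0 t, u x t + ε * (t - τ) ≤ u x τ) := by
  simp only [AntitoneOn, not_forall, not_le] at h
  obtain ⟨x₀, hx₀, t₀, ht₀, s₀, -, hts₀, hinc₀⟩ := h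
  rw [mem_Ici] at ht₀
  obtain ⟨ε, hε, hεlt⟩ : ∃ ε > 0, (t₀ + s₀) * ε < u x₀ s₀ - u x₀ t₀ :=
    exists_pos_mul_lt (sub_pos.2 hinc₀) (t₀ + s₀)
  have hmem₀ : (x₀, t₀, s₀) ∈ K ×ˢ {p : ℝ × ℝ | 0 ≤ p.1 ∧ p.1 ≤ p.2 ∧ p.2 ≤ s₀} :=
    ⟨hx₀, ht₀, hts₀, le_rfl⟩
  obtain ⟨⟨x, t, s⟩, ⟨hx, ht, hts, hs⟩, hmax⟩ :=
    (hK.prod (isCompact_setOf_le_le_le 0 s₀)).exists_isMaxOn ⟨_, hmem₀⟩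
      (continuousOn_penalizedIncrement hu ε s₀)
  dsimp only at hx ht hts hs
  have hmax_le {y : X} {τ σ : ℝ} (hy : y ∈ K) (hτ : 0 ≤ τ) (hτσ : τ ≤ σ) (hσ : σ ≤ s₀) :
      u y σ - u y τ - ε * (τ + σ) ≤ u x s - u x t - ε * (t + s) :=
    hmax (show (y, τ, σ) ∈ K ×ˢ _ from ⟨hy, hτ, hτσ, hσ⟩)
  have hpos : 0 < u x s - u x t := by
    have := hmax_le hx₀ ht₀ hts₀ le_rfl
    have : 0 ≤ ε * (t + s) := mul_nonneg hε.le (add_nonneg ht (ht.trans hts))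
    linarith
  have hne : t ≠ s := by
    rintro rfl
    exact hpos.ne' (sub_self _)
  refine ⟨ε, hε, x, hx, t, s, ht, hts.lt_of_ne hne, sub_pos.1 hpos, fun y hy => ?_,
    fun σ hσ => ?_, fun τ hτ => ?_⟩
  · linarith [hmax_le hy ht hts hs]
  · linarith [hmax_le hx ht hσ.1.le (hσ.2.le.trans hs)]
  · linarith [hmax_le hx hτ.1.le (hτ.2.le.trans hts) hs]

end Antitone

section EllipticFlow

variable {E : Type*} [NormedAddCommGroup E] [NormedSpace ℝ E]

/-- A possibly nonlinear operator `L` of second order is elliptic at `x` if it satisfies the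
comparison form of the maximum principle there. The condition `w x ≤ u x` makes room for
zeroth-order terms that are nonincreasing in the unknown. -/
def IsEllipticAt (L : (E → ℝ) → E → ℝ) (x : E) : Prop :=
  ∀ ⦃u w : E → ℝ⦄, ContDiffAt ℝ 2 u x → ContDiffAt ℝ 2 w x →
    IsLocalMax (fun y => u y - w y) x → w x ≤ u x → L u x ≤ L w x

theorem antitoneOn_of_isEllipticAt {K : Set E} (hK : IsCompact K) {L : (E → ℝ) → E → ℝ}
    (hL : ∀ x ∈ interior K, IsEllipticAt L x) {q u : E → ℝ → ℝ}
    (hq : ∀ x ∈ interior K, ∀ t ∈ Ioi 0, 0 ≤ q x t)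
    (hu : ContinuousOn (fun p : E × ℝ => u p.1 p.2) (K ×ˢ Ici 0))
    (hux : ∀ x ∈ interior K, ∀ t ∈ Ici 0, ContDiffAt ℝ 2 (fun y => u y t) x)
    (hut : ∀ x ∈ interior K, ∀ t ∈ Ioi 0, DifferentiableAt ℝ (u x) t)
    (hflow : ∀ x ∈ interior K, ∀ t ∈ Ioi 0, deriv (u x) t = q x t * L (fun y => u y t) x)
    (hinit : ∀ x ∈ interior K, L (fun y => u y 0) x ≤ 0)
    (hbdry : ∀ x ∈ frontier K, AntitoneOn (u x) (Ici 0)) :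
    ∀ x ∈ K, AntitoneOn (u x) (Ici 0) := by
  by_contra hanti
  obtain ⟨ε, hε, x, hxK, t, s, ht, hts, hinc, hmax_x, hmax_s, hmax_t⟩ :=
    exists_penalized_max_of_not_antitoneOn hK hu hanti
  have hs : 0 < s := ht.trans_lt hts
  have hx : x ∈ interior K := by
    by_contra hxint
    exact (hbdry x ⟨subset_closure hxK, hxint⟩ ht hs.le hts.le).not_gt hinc
  have hLs : 0 < L (fun y => u y s) x := by
    have hderiv : ε ≤ deriv (u x) s := le_deriv_of_forall_mem_Ioo (hut x hx s hs) hts hmax_s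
    rw [hflow x hx s hs] at hderiv
    exact pos_of_mul_pos_right (hε.trans_le hderiv) (hq x hx s hs)
  have hLt : L (fun y => u y t) x ≤ 0 := by
    rcases ht.eq_or_lt with rfl | ht
    · exact hinit x hx
    have hderiv : ε ≤ deriv (fun τ => -u x τ) t :=
      le_deriv_of_forall_mem_Ioo (hut x hx t ht).fun_neg ht fun τ hτ => by
        linarith [hmax_t τ hτ]
    rw [deriv.fun_neg, hflow x hx t ht, ← mul_neg] at hderiv
    exact (neg_pos.1 (pos_of_mul_pos_right (hε.trans_le hderiv) (hq x hx t ht))).le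
  have hmax : IsLocalMax (fun y => u y s - u y t) x :=
    mem_of_superset (mem_interior_iff_mem_nhds.1 hx) hmax_x
  exact (hLs.trans_le (hL x hx (hux x hx s hs.le) (hux x hx t ht) hmax hinc.le)).not_ge hLt

end EllipticFlow

section JFlow

/-- The operator on the right-hand side of the `J`-flow reduced by the Calabi ansatz, without the
factor `Q(ψ)`. The dimensions `m` and `n` are allowed to be real. -/
noncomputable def jOperator (m n : ℝ) (u : ℝ → ℝ) (x : ℝ) : ℝ :=
  deriv (deriv u) x + (m / x + n / (1 + x)) * deriv u x
    - (m / x ^ 2 + n / (1 + x) ^ 2) * u x - n / (1 + x) ^ 2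

variable {m n a b c x : ℝ} {u w : ℝ → ℝ}

lemma isEllipticAt_jOperator (hm : 0 ≤ m) (hn : 0 ≤ n) : IsEllipticAt (jOperator m n) x := by
  intro u w hu hw hmax hle
  have hderiv : deriv u x = deriv w x := deriv_eq_of_isLocalMax_sub
    (hu.differentiableAt (by norm_num)) (hw.differentiableAt (by norm_num)) hmax
  have hderiv2 : deriv (deriv u) x ≤ deriv (deriv w) x :=
    deriv_deriv_le_of_isLocalMax_sub hu hw hmax
  unfold jOperator
  rw [hderiv]
  gcongr

lemma jOperator_congr (h : u =ᶠ[𝓝 x] w) : jOperator m n u x = jOperator m n w x := by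
  rw [jOperator, jOperator, h.deriv.deriv_eq, h.deriv_eq, h.eq_of_nhds]

lemma jOperator_const_mul (hx : x ≠ 0) (hx' : 1 + x ≠ 0) :
    jOperator m n (fun y => c * y) x = n / (1 + x) ^ 2 * (c - 1) := by
  have hderiv : deriv (fun y => c * y) = fun _ => c := by
    ext y
    simp
  rw [jOperator, hderiv, deriv_const]
  field_simp
  ring

lemma jOperator_const_mul_nonpos (hn : 0 ≤ n) (hx : 0 < x) (hc : c ≤ 1) :
    jOperator m n (fun y => c * y) x ≤ 0 := by
  rw [jOperator_const_mul hx.ne' (by positivity)]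
  exact mul_nonpos_of_nonneg_of_nonpos (by positivity) (sub_nonpos.2 hc)

theorem stmt_12_general (hm : 0 ≤ m) (hn : 0 ≤ n) (ha : 0 < a) (hba : b ≤ a) {q ψ : ℝ → ℝ → ℝ}
    (hq : ∀ x ∈ Ioo 0 a, ∀ t ∈ Ioi 0, 0 ≤ q x t)
    (hcont : ContinuousOn (fun p : ℝ × ℝ => ψ p.1 p.2) (Icc 0 a ×ˢ Ici 0))
    (hC2 : ContDiffOn ℝ 2 (fun p : ℝ × ℝ => ψ p.1 p.2) (Ioo 0 a ×ˢ Ioi 0))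
    (hflow : ∀ x ∈ Ioo 0 a, ∀ t ∈ Ioi 0,
      deriv (ψ x) t = q x t * jOperator m n (fun y => ψ y t) x)
    (hbd0 : ∀ t ∈ Ici 0, ψ 0 t = 0) (hbda : ∀ t ∈ Ici 0, ψ a t = b)
    (hinit : ∀ x ∈ Icc 0 a, ψ x 0 = b / a * x) :
    ∀ x ∈ Icc 0 a, AntitoneOn (ψ x) (Ici 0) := by
  have hline {x : ℝ} (hx : x ∈ Ioo 0 a) : (fun y => ψ y 0) =ᶠ[𝓝 x] fun y => b / a * y := by
    filter_upwards [Icc_mem_nhds hx.1 hx.2] with y hy using hinit y hy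
  have hC2_at {x t : ℝ} (hx : x ∈ Ioo 0 a) (ht : t ∈ Ioi 0) :
      ContDiffAt ℝ 2 (fun p : ℝ × ℝ => ψ p.1 p.2) (x, t) :=
    hC2.contDiffAt ((isOpen_Ioo.prod isOpen_Ioi).mem_nhds ⟨hx, ht⟩)
  refine antitoneOn_of_isEllipticAt isCompact_Icc (L := jOperator m n) (q := q)
    (fun _ _ => isEllipticAt_jOperator hm hn) ?_ hcont ?_ ?_ ?_ ?_ ?_
  all_goals simp only [interior_Icc, frontier_Icc ha.le]
  · exact hq
  · intro x hx t ht
    rcases (mem_Ici.1 ht).eq_or_lt with rfl | ht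
    · exact ContDiffAt.congr_of_eventuallyEq (by fun_prop) (hline hx)
    · exact contDiffAt_slice_left (hC2_at hx ht)
  · exact fun x hx t ht =>
      (contDiffAt_slice_right (hC2_at hx ht)).differentiableAt (by norm_num)
  · exact hflow
  · intro x hx
    rw [jOperator_congr (hline hx)]
    exact jOperator_const_mul_nonpos hn hx.1 ((div_le_one ha).2 hba)
  · rintro x (rfl | rfl) t ht s hs -
    · exact (hbd0 s hs).trans (hbd0 t ht).symm |>.le
    · exact (hbda s hs).trans (hbda t ht).symm |>.le

end JFlow

/-- Monotonicity along the `J`-flow under the Calabi ansatz with straight-line initial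
data: if `μ_0 ≤ n`, `Q` is `C¹` and nonnegative on `[0,b]`, and
`ψ : [0,a] × [0,∞) → [0,b]` is smooth on `(0,a) × (0,∞)`, continuous up to the
boundary, solves `∂_t ψ = Q(ψ)(∂_x²ψ + (m/x + n/(1+x))∂_xψ - (m/x² + n/(1+x)²)ψ -
n/(1+x)²)` with `ψ(0,t) = 0`, `ψ(a,t) = b`, `ψ(x,0) = (b/a)x`, and for each `T > 0`
the quantity `Q'(ψ)(…)` is bounded on `(0,a) × (0,T]`, then `∂_t ψ ≤ 0` on
`[0,a] × [0,∞)`. -/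
theorem stmt_12 (m n : ℕ) (hn : 1 ≤ n) (a b : ℝ) (ha : 0 < a) (hb : 0 < b)
    (h0 : muZero m n a b ≤ n)
    (Q : ℝ → ℝ) (hQdiff : ContDiffOn ℝ 1 Q (Set.Icc 0 b))
    (hQnonneg : ∀ y ∈ Set.Icc (0:ℝ) b, 0 ≤ Q y)
    (ψ : ℝ → ℝ → ℝ)
    (hmaps : ∀ x ∈ Set.Icc (0:ℝ) a, ∀ t ∈ Set.Ici (0:ℝ), ψ x t ∈ Set.Icc 0 b)
    (hcont : ContinuousOn (fun p : ℝ × ℝ => ψ p.1 p.2) (Set.Icc 0 a ×ˢ Set.Ici 0))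
    (hsmooth : ContDiffOn ℝ (⊤ : ℕ∞) (fun p : ℝ × ℝ => ψ p.1 p.2) (Set.Ioo 0 a ×ˢ Set.Ioi 0))
    (hPDE : ∀ x ∈ Set.Ioo (0:ℝ) a, ∀ t ∈ Set.Ioi (0:ℝ),
      deriv (fun τ => ψ x τ) t = Q (ψ x t) *
        (deriv (fun y => deriv (fun z => ψ z t) y) x
          + ((m : ℝ) / x + (n : ℝ) / (1 + x)) * deriv (fun y => ψ y t) x
          - ((m : ℝ) / x ^ 2 + (n : ℝ) / (1 + x) ^ 2) * ψ x t
          - (n : ℝ) / (1 + x) ^ 2))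
    (hbd0 : ∀ t ∈ Set.Ici (0:ℝ), ψ 0 t = 0)
    (hbda : ∀ t ∈ Set.Ici (0:ℝ), ψ a t = b)
    (hinit : ∀ x ∈ Set.Icc (0:ℝ) a, ψ x 0 = (b / a) * x)
    (hbound : ∀ T > (0:ℝ), ∃ C : ℝ, ∀ x ∈ Set.Ioo (0:ℝ) a, ∀ t ∈ Set.Ioc (0:ℝ) T,
      |deriv Q (ψ x t) *
        (deriv (fun y => deriv (fun z => ψ z t) y) x
          + ((m : ℝ) / x + (n : ℝ) / (1 + x)) * deriv (fun y => ψ y t) x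
          - ((m : ℝ) / x ^ 2 + (n : ℝ) / (1 + x) ^ 2) * ψ x t
          - (n : ℝ) / (1 + x) ^ 2)| ≤ C) :
    ∀ x ∈ Set.Icc (0:ℝ) a, ∀ t ∈ Set.Ici (0:ℝ), deriv (fun τ => ψ x τ) t ≤ 0 := by
  intro x hx t ht
  refine deriv_nonpos_of_antitoneOn ?_ (uniqueDiffOn_Ici 0 t ht)
  exact stmt_12_general (q := fun x t => Q (ψ x t)) m.cast_nonneg n.cast_nonneg ha
    (lt_of_muZero_le hn ha h0).le
    (fun x hx t ht => hQnonneg _ (hmaps x (Ioo_subset_Icc_self hx) t (Ioi_subset_Ici_self ht)))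
    hcont (hsmooth.of_le (WithTop.coe_le_coe.2 le_top)) hPDE hbd0 hbda hinit x hx
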